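/- arXiv:cs/0609138 — 2 statements merged into one kernel-verified Lean document; each statement's English description precedes it below -/
import Mathlib

section
/- Let n ≥ 2 be an integer, let γ ⊆ {1,…,n} have cardinality k with 1 ≤ k ≤ n−1, and let 0 < σ²_min < σ²_max. Define R = {c ∈ ℝⁿ : σ²_min ≤ S_γ(c)/k ≤ σ²_max and σ²_min ≤ (S(c) − S_γ(c))/(n−k) ≤ σ²_max}. Then the parametric complexity, i.e., the integral over R of the maximized likelihood c ↦ Π_{i∈γ} φ(c_i; 0, S_γ(c)/k) · Π_{i∉γ} φ(c_i; 0, (S(c) − S_γ(c))/(n−k)), equals C = k^{k/2} (n−k)^{(n−k)/2} / ((2e)^{n/2} Γ(k/2) Γ((n−k)/2)) · (ln(σ²_max/σ²_min))². -/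
open MeasureTheory Real Finset

/-- `Sg γ c = ∑_{i ∈ γ} c_i²`. -/
noncomputable def Sg {n : ℕ} (γ : Finset (Fin n)) (c : Fin n → ℝ) : ℝ :=
  ∑ i ∈ γ, (c i) ^ 2

/-- `Stot c = ∑_{i=1}^n c_i²`. -/
noncomputable def Stot {n : ℕ} (c : Fin n → ℝ) : ℝ :=
  ∑ i, (c i) ^ 2

/-- Centered Gaussian density `φ(x; 0, σ²) = (2πσ²)^{-1/2} exp(-x²/(2σ²))`. -/
noncomputable def gauss (x σ2 : ℝ) : ℝ :=
  (2 * Real.pi * σ2) ^ (-(1 : ℝ) / 2) * Real.exp (-(x ^ 2) / (2 * σ2))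

/-!
At its maximum the Gaussian likelihood of a block of `d` coordinates with square sum `s` is
`(d / (2πe)) ^ (d / 2) * s ^ (-d / 2)`, a constant multiple of `‖x‖ ^ (-d)`. In polar coordinates
the factor `r ^ (d - 1)` turns this into `r⁻¹`, so integrating over the annulus
`d * σmin ≤ ‖x‖ ^ 2 ≤ d * σmax` gives `log (σmax / σmin) / 2` times the area
`2π ^ (d / 2) / Γ(d / 2)` of the unit sphere. By Fubini, each of the two blocks
contributes one such factor.
-/

section RadialIntegral

variable {E : Type*} [NormedAddCommGroup E] [NormedSpace ℝ E] [FiniteDimensional ℝ E]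
  [MeasurableSpace E] [BorelSpace E] [Nontrivial E]

lemma setIntegral_annulus_norm_pow_inv (μ : Measure E) [μ.IsAddHaarMeasure] {r R : ℝ}
    (hr : 0 < r) (hrR : r ≤ R) :
    ∫ x in {x : E | ‖x‖ ∈ Set.Icc r R}, (‖x‖ ^ Module.finrank ℝ E)⁻¹ ∂μ =
      Module.finrank ℝ E * μ.real (Metric.ball 0 1) * log (R / r) := by
  set d := Module.finrank ℝ E
  have polar_integrand : ∀ y ∈ Set.Ioi (0 : ℝ),
      y ^ (d - 1) • (Set.Icc r R).indicator (fun t ↦ (t ^ d)⁻¹) y =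
        (Set.Icc r R).indicator (fun t ↦ t⁻¹) y := by
    intro y (hy : 0 < y)
    by_cases h : y ∈ Set.Icc r R
    · have hpow : y ^ d = y ^ (d - 1) * y := (pow_sub_one_mul Module.finrank_pos.ne' y).symm
      rw [Set.indicator_of_mem h, Set.indicator_of_mem h, smul_eq_mul, hpow]
      field_simp
    · rw [Set.indicator_of_notMem h, Set.indicator_of_notMem h, smul_zero]
  have annulus_pos : Set.Icc r R ⊆ Set.Ioi 0 := fun y hy ↦ hr.trans_le hy.1
  calc ∫ x in {x : E | ‖x‖ ∈ Set.Icc r R}, (‖x‖ ^ d)⁻¹ ∂μ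
      = ∫ x, (Set.Icc r R).indicator (fun t ↦ (t ^ d)⁻¹) ‖x‖ ∂μ :=
        (integral_indicator (measurable_norm measurableSet_Icc)).symm
    _ = d * μ.real (Metric.ball 0 1) * ∫ y in r..R, y⁻¹ := by
        rw [integral_fun_norm_addHaar, setIntegral_congr_fun measurableSet_Ioi polar_integrand,
          setIntegral_indicator measurableSet_Icc, Set.inter_eq_right.2 annulus_pos,
          integral_Icc_eq_integral_Ioc, ← intervalIntegral.integral_of_le hrR,
          nsmul_eq_mul, smul_eq_mul, mul_assoc]
    _ = d * μ.real (Metric.ball 0 1) * log (R / r) := by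
        rw [integral_inv_of_pos hr (hr.trans_le hrR)]

end RadialIntegral

section Euclidean

variable {ι : Type*} [Fintype ι] [Nonempty ι]

lemma card_mul_volume_real_ball_zero_one :
    Fintype.card ι * volume.real (Metric.ball (0 : EuclideanSpace ℝ ι) 1) =
      2 * π ^ ((Fintype.card ι : ℝ) / 2) / Gamma ((Fintype.card ι : ℝ) / 2) := by
  have hcard : (0 : ℝ) < Fintype.card ι := by exact_mod_cast Fintype.card_pos
  have : 0 < Gamma ((Fintype.card ι : ℝ) / 2) := Gamma_pos_of_pos (half_pos hcard)
  have hsqrt : √π ^ Fintype.card ι = π ^ ((Fintype.card ι : ℝ) / 2) := by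
    rw [sqrt_eq_rpow, ← rpow_mul_natCast pi_pos.le, one_div_mul_eq_div]
  rw [Measure.real, EuclideanSpace.volume_ball, ENNReal.ofReal_one, one_pow, one_mul,
    Gamma_add_one (half_pos hcard).ne', hsqrt, ENNReal.toReal_ofReal (by positivity)]
  field_simp

lemma setIntegral_sum_sq_rpow_neg {a b : ℝ} (ha : 0 < a) (hab : a ≤ b) :
    ∫ x in {x : ι → ℝ | ∑ i, x i ^ 2 ∈ Set.Icc a b},
        (∑ i, x i ^ 2) ^ (-((Fintype.card ι : ℝ) / 2)) =
      π ^ ((Fintype.card ι : ℝ) / 2) / Gamma ((Fintype.card ι : ℝ) / 2) * log (b / a) := by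
  have sum_sq_eq_norm_sq (x : EuclideanSpace ℝ ι) : ∑ i, x i ^ 2 = ‖x‖ ^ 2 :=
    (EuclideanSpace.real_norm_sq_eq x).symm
  have setOf_sum_sq_mem_Icc : {x : EuclideanSpace ℝ ι | ∑ i, x i ^ 2 ∈ Set.Icc a b} =
      {x | ‖x‖ ∈ Set.Icc √a √b} := by
    ext x
    rw [Set.mem_ofPred_eq, Set.mem_ofPred_eq, Set.mem_Icc, Set.mem_Icc, sum_sq_eq_norm_sq,
      sqrt_le_left (norm_nonneg x), Real.le_sqrt (norm_nonneg x) (ha.le.trans hab)]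
  have rpow_eq_norm_pow_inv (x : EuclideanSpace ℝ ι) :
      (∑ i, x i ^ 2) ^ (-((Fintype.card ι : ℝ) / 2)) =
        (‖x‖ ^ Module.finrank ℝ (EuclideanSpace ℝ ι))⁻¹ := by
    rw [sum_sq_eq_norm_sq, rpow_neg (by positivity), ← rpow_natCast_mul (norm_nonneg x),
      Nat.cast_two, mul_div_cancel₀ _ two_ne_zero, rpow_natCast, finrank_euclideanSpace]
  calc _ = ∫ x in {x : EuclideanSpace ℝ ι | ∑ i, x i ^ 2 ∈ Set.Icc a b},
        (∑ i, x i ^ 2) ^ (-((Fintype.card ι : ℝ) / 2)) :=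
        ((EuclideanSpace.volume_preserving_symm_measurableEquiv_toLp ι).setIntegral_preimage_emb
          (MeasurableEquiv.measurableEmbedding _) _ _).symm
    _ = ∫ x in {x : EuclideanSpace ℝ ι | ‖x‖ ∈ Set.Icc √a √b},
        (‖x‖ ^ Module.finrank ℝ (EuclideanSpace ℝ ι))⁻¹ := by
        simp only [setOf_sum_sq_mem_Icc, rpow_eq_norm_pow_inv]
    _ = 2 * π ^ ((Fintype.card ι : ℝ) / 2) / Gamma ((Fintype.card ι : ℝ) / 2) *
        log (√b / √a) := by
        rw [setIntegral_annulus_norm_pow_inv volume (sqrt_pos.2 ha) (sqrt_le_sqrt hab),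
          finrank_euclideanSpace, card_mul_volume_real_ball_zero_one]
    _ = _ := by
        rw [← sqrt_div (ha.le.trans hab), log_sqrt (div_nonneg (ha.le.trans hab) ha.le)]
        ring

end Euclidean

section Fubini

variable {ι 𝕜 : Type*} [Fintype ι] [RCLike 𝕜] {α : ι → Type*} [∀ i, MeasurableSpace (α i)]

lemma setIntegral_pi_subtype_mul (μ : ∀ i, Measure (α i)) [∀ i, SigmaFinite (μ i)]
    (p : ι → Prop) [Fintype {i // p i}] [Fintype {i // ¬p i}]
    (A : Set (∀ i : {i // p i}, α i)) (B : Set (∀ i : {i // ¬p i}, α i))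
    (f : (∀ i : {i // p i}, α i) → 𝕜) (g : (∀ i : {i // ¬p i}, α i) → 𝕜) :
    ∫ x in {x : ∀ i, α i | (fun i : {i // p i} ↦ x i) ∈ A ∧ (fun i : {i // ¬p i} ↦ x i) ∈ B},
        f (fun i ↦ x i) * g (fun i ↦ x i) ∂Measure.pi μ =
      (∫ y in A, f y ∂Measure.pi fun i : {i // p i} ↦ μ i) *
        ∫ z in B, g z ∂Measure.pi fun i : {i // ¬p i} ↦ μ i := by
  classical
  convert! ((measurePreserving_piEquivPiSubtypeProd μ p).setIntegral_preimage_emb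
    (MeasurableEquiv.measurableEmbedding _) (fun w ↦ f w.1 * g w.2) (A ×ˢ B)).trans
    (setIntegral_prod_mul f g A B)

end Fubini

section MaxLikelihood

variable {ι : Type*}

/-- The maximum likelihood estimate of the variance of the centered Gaussian model for the
coordinates of `x` in the block `s`. It is `0` for the empty block. -/
noncomputable def mleVariance (s : Finset ι) (x : ι → ℝ) : ℝ :=
  (∑ i ∈ s, x i ^ 2) / #s

/-- The likelihood of the coordinates of `x` in the block `s` under the centered Gaussian
model, evaluated at the maximum likelihood estimate of its variance. -/
noncomputable def maxLikelihood (s : Finset ι) (x : ι → ℝ) : ℝ :=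
  ∏ i ∈ s, gauss (x i) (mleVariance s x)

lemma mleVariance_eq_univ_subtype {s : Finset ι} {p : ι → Prop} [Fintype (Subtype p)]
    (h : ∀ i, i ∈ s ↔ p i) (x : ι → ℝ) :
    mleVariance s x = mleVariance univ fun i : Subtype p ↦ x i := by
  rw [mleVariance, mleVariance, sum_subtype s h, card_univ, Fintype.card_of_subtype s h]

lemma maxLikelihood_eq_univ_subtype {s : Finset ι} {p : ι → Prop} [Fintype (Subtype p)]
    (h : ∀ i, i ∈ s ↔ p i) (x : ι → ℝ) :
    maxLikelihood s x = maxLikelihood univ fun i : Subtype p ↦ x i := by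
  rw [maxLikelihood, maxLikelihood, prod_subtype s h, mleVariance_eq_univ_subtype h]

lemma prod_gauss (s : Finset ι) (x : ι → ℝ) {v : ℝ} (hv : 0 ≤ v) :
    ∏ i ∈ s, gauss (x i) v =
      (2 * π * v) ^ (-((#s : ℝ) / 2)) * exp (-(∑ i ∈ s, x i ^ 2) / (2 * v)) := by
  simp only [gauss]
  rw [prod_mul_distrib, prod_const, ← exp_sum, ← sum_div, sum_neg_distrib,
    ← rpow_mul_natCast (by positivity)]
  congr 2
  ring

lemma maxLikelihood_eq_rpow {s : Finset ι} {x : ι → ℝ} (hx : 0 < mleVariance s x) :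
    maxLikelihood s x =
      (#s / (2 * π * exp 1)) ^ ((#s : ℝ) / 2) * (∑ i ∈ s, x i ^ 2) ^ (-((#s : ℝ) / 2)) := by
  have hcard : (0 : ℝ) < #s := (Nat.cast_nonneg _).lt_of_ne' fun h ↦ by
    simp [mleVariance, h] at hx
  have hsum : 0 < ∑ i ∈ s, x i ^ 2 := (div_pos_iff_of_pos_right hcard).1 hx
  have hexponent : -(∑ i ∈ s, x i ^ 2) / (2 * mleVariance s x) = -((#s : ℝ) / 2) := by
    rw [mleVariance]
    field_simp
  rw [maxLikelihood, prod_gauss s x hx.le, hexponent, ← exp_one_rpow,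
    ← mul_rpow (by positivity) (exp_pos 1).le, rpow_neg (by positivity), rpow_neg hsum.le,
    ← inv_rpow (by positivity), ← inv_rpow hsum.le, ← mul_rpow (by positivity) (by positivity)]
  congr 1
  rw [mleVariance]
  field_simp

lemma setIntegral_maxLikelihood_univ [Fintype ι] [Nonempty ι] {a b : ℝ} (ha : 0 < a)
    (hab : a ≤ b) :
    ∫ x in {x : ι → ℝ | mleVariance univ x ∈ Set.Icc a b}, maxLikelihood univ x =
      (Fintype.card ι : ℝ) ^ ((Fintype.card ι : ℝ) / 2) /
        ((2 * exp 1) ^ ((Fintype.card ι : ℝ) / 2) * Gamma ((Fintype.card ι : ℝ) / 2)) *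
        log (b / a) := by
  set d : ℝ := (Fintype.card ι : ℝ) with hd
  have hd_pos : 0 < d := Nat.cast_pos.2 Fintype.card_pos
  have hset : {x : ι → ℝ | mleVariance univ x ∈ Set.Icc a b} =
      {x | ∑ i, x i ^ 2 ∈ Set.Icc (a * d) (b * d)} := by
    ext x
    simp only [mleVariance, card_univ, Set.mem_ofPred_eq, Set.mem_Icc, ← hd, le_div_iff₀ hd_pos,
      div_le_iff₀ hd_pos]
  have hmeas : MeasurableSet {x : ι → ℝ | mleVariance univ x ∈ Set.Icc a b} := by
    have : Measurable fun x : ι → ℝ ↦ mleVariance univ x := by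
      unfold mleVariance
      fun_prop
    exact this measurableSet_Icc
  have hconst : (d / (2 * π * exp 1)) ^ (d / 2) =
      d ^ (d / 2) / ((2 * exp 1) ^ (d / 2) * π ^ (d / 2)) := by
    rw [div_rpow hd_pos.le (by positivity), ← mul_rpow (by positivity) pi_pos.le,
      mul_right_comm]
  rw [setIntegral_congr_fun hmeas fun x hx ↦ maxLikelihood_eq_rpow (ha.trans_le hx.1), hset,
    integral_const_mul, card_univ, setIntegral_sum_sq_rpow_neg (by positivity) (by gcongr),
    ← hd, hconst, mul_div_mul_right b a hd_pos.ne']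
  field_simp

theorem stmt_8_general [Fintype ι] [DecidableEq ι] {γ : Finset ι} (hγ : γ.Nonempty)
    (hγc : γᶜ.Nonempty) {a b a' b' : ℝ} (ha : 0 < a) (hab : a ≤ b) (ha' : 0 < a')
    (hab' : a' ≤ b') :
    ∫ c in {c : ι → ℝ | mleVariance γ c ∈ Set.Icc a b ∧ mleVariance γᶜ c ∈ Set.Icc a' b'},
        maxLikelihood γ c * maxLikelihood γᶜ c =
      (#γ : ℝ) ^ ((#γ : ℝ) / 2) * (#γᶜ : ℝ) ^ ((#γᶜ : ℝ) / 2) /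
        ((2 * exp 1) ^ ((Fintype.card ι : ℝ) / 2) * Gamma ((#γ : ℝ) / 2) *
          Gamma ((#γᶜ : ℝ) / 2)) *
        (log (b / a) * log (b' / a')) := by
  have hmem (i : ι) : i ∈ γᶜ ↔ ¬i ∈ γ := mem_compl
  have : Nonempty {i // i ∈ γ} := hγ.to_subtype
  have : Nonempty {i // ¬i ∈ γ} := hγc.elim fun i hi ↦ ⟨i, mem_compl.1 hi⟩
  have hexp : (2 * exp 1) ^ ((Fintype.card ι : ℝ) / 2) =
      (2 * exp 1) ^ ((#γ : ℝ) / 2) * (2 * exp 1) ^ ((#γᶜ : ℝ) / 2) := by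
    rw [← rpow_add (by positivity), ← add_div, ← card_add_card_compl γ, Nat.cast_add]
  simp only [mleVariance_eq_univ_subtype (s := γ) fun _ ↦ Iff.rfl,
    mleVariance_eq_univ_subtype hmem, maxLikelihood_eq_univ_subtype (s := γ) fun _ ↦ Iff.rfl,
    maxLikelihood_eq_univ_subtype hmem]
  refine (setIntegral_pi_subtype_mul (fun _ ↦ (volume : Measure ℝ)) (· ∈ γ)
    {y | mleVariance univ y ∈ Set.Icc a b} {z | mleVariance univ z ∈ Set.Icc a' b'}
    (maxLikelihood univ) (maxLikelihood univ)).trans ?_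
  simp only [← volume_pi]
  rw [setIntegral_maxLikelihood_univ ha hab, setIntegral_maxLikelihood_univ ha' hab',
    Fintype.card_of_subtype γ fun _ ↦ Iff.rfl, Fintype.card_of_subtype γᶜ hmem, hexp]
  ring

end MaxLikelihood

lemma Stot_sub_Sg {n : ℕ} (γ : Finset (Fin n)) (c : Fin n → ℝ) :
    Stot c - Sg γ c = Sg γᶜ c :=
  sub_eq_of_eq_add' (sum_add_sum_compl γ _).symm

lemma natCast_sub_card {n : ℕ} (γ : Finset (Fin n)) : (n : ℝ) - #γ = #γᶜ := by
  rw [card_compl, Fintype.card_fin, Nat.cast_sub (card_finset_fin_le γ)]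

theorem stmt_8 (n k : ℕ) (hn : 2 ≤ n) (γ : Finset (Fin n)) (hγ : γ.card = k)
    (hk1 : 1 ≤ k) (hk2 : k ≤ n - 1) (σmin σmax : ℝ) (h0 : 0 < σmin) (hσ : σmin < σmax) :
    ∫ c in {c : Fin n → ℝ |
        σmin ≤ Sg γ c / k ∧ Sg γ c / k ≤ σmax ∧
        σmin ≤ (Stot c - Sg γ c) / ((n : ℝ) - k) ∧
        (Stot c - Sg γ c) / ((n : ℝ) - k) ≤ σmax},
      ((∏ i ∈ γ, gauss (c i) (Sg γ c / k)) *
        ∏ i ∈ γᶜ, gauss (c i) ((Stot c - Sg γ c) / ((n : ℝ) - k)))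
    = (k : ℝ) ^ ((k : ℝ) / 2) * ((n : ℝ) - k) ^ (((n : ℝ) - k) / 2) /
        ((2 * Real.exp 1) ^ ((n : ℝ) / 2) *
          Real.Gamma ((k : ℝ) / 2) * Real.Gamma (((n : ℝ) - k) / 2)) *
        (Real.log (σmax / σmin)) ^ 2 := by
  subst hγ
  have hγc : γᶜ.Nonempty := by rw [← card_pos, card_compl, Fintype.card_fin]; omega
  simp only [Stot_sub_Sg, natCast_sub_card]
  simpa [mleVariance, maxLikelihood, Sg, and_assoc, sq] using
    stmt_8_general (card_pos.1 hk1) hγc h0 hσ.le h0 hσ.le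
end

section
/- Let n ≥ 1 and B ≥ 0 be integers, let γ_0, γ_1, …, γ_B be a partition of {1,…,n} with |γ_b| = k_b ≥ 1 for each b, and let 0 < σ²_min < σ²_max. Then ∫ over the region {c ∈ ℝⁿ : σ²_min ≤ S_{γ_b}(c)/k_b ≤ σ²_max for all b = 0,…,B} of Π_{b=0}^{B} S_{γ_b}(c)^{−k_b/2} dc = π^{n/2} · (ln(σ²_max/σ²_min))^{B+1} / Π_{b=0}^{B} Γ(k_b/2). -/
open MeasureTheory Real Finset

/-! Splitting `ℝⁿ` along the partition turns the integral into a product of integrals over the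
blocks. On a block of size `k`, polar coordinates and the substitution `s = r ^ 2` show that the
squared norm pushes Lebesgue measure forward to `π ^ (k / 2) / Γ (k / 2) * s ^ (k / 2 - 1) ds`.
The integrand `s ^ (-k / 2)` turns this density into a multiple of `ds / s`, whose integral depends
only on the ratio of the endpoints: the normalization of `s` by `k` cancels. -/

open Set (Icc Ioi)

section Blocks

variable {ι β : Type*} {γ : β → Finset ι} {X : ι → Type*} [∀ i, MeasurableSpace (X i)]

theorem existsUnique_mem_of_pairwise_disjoint
    (hdisj : Pairwise (Function.onFun Disjoint γ)) (hcover : ∀ i, ∃ b, i ∈ γ b) (i : ι) :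
    ∃! b, i ∈ γ b := by
  obtain ⟨b, hb⟩ := hcover i
  refine ⟨b, hb, fun b' hb' ↦ ?_⟩
  by_contra hne
  exact disjoint_left.1 (hdisj hne) hb' hb

theorem card_eq_sum_card_of_existsUnique_mem [Fintype ι] [Fintype β]
    (hγ : ∀ i, ∃! b, i ∈ γ b) : Fintype.card ι = ∑ b, #(γ b) := by
  simpa using (Fintype.card_congr (Set.sigmaEquiv (fun b ↦ (γ b : Set ι)) hγ)).symm

theorem measurePreserving_piCurry_symm [Fintype β] {κ : β → Type*} [∀ b, Fintype (κ b)]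
    {Y : ∀ b, κ b → Type*} [∀ b j, MeasurableSpace (Y b j)] (μ : ∀ b j, Measure (Y b j))
    [∀ b j, SigmaFinite (μ b j)] :
    MeasurePreserving (MeasurableEquiv.piCurry Y).symm
      (Measure.pi fun b ↦ Measure.pi (μ b)) (Measure.pi fun p : Sigma κ ↦ μ p.1 p.2) := by
  refine ⟨MeasurableEquiv.measurable _, (Measure.pi_eq fun s _ ↦ ?_).symm⟩
  have preimage_box : (MeasurableEquiv.piCurry Y).symm ⁻¹' Set.pi Set.univ s =
      Set.pi Set.univ fun b ↦ Set.pi Set.univ fun j ↦ s ⟨b, j⟩ := by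
    ext y
    simp [MeasurableEquiv.coe_piCurry_symm, Sigma.uncurry, Sigma.forall]
  simp only [MeasurableEquiv.map_apply, preimage_box, Measure.pi_pi, Fintype.prod_sigma]

/-- The blocks `γ b` of a partition of `ι` identify a family indexed by `ι` with the family of its
restrictions to the blocks, so that integrals over the product split into integrals over the
blocks. The partition is encoded by `∀ i, ∃! b, i ∈ γ b`. -/
noncomputable def piEquivBlocks (hγ : ∀ i, ∃! b, i ∈ γ b) :
    (∀ i, X i) ≃ᵐ ∀ b, ∀ i : γ b, X i :=
  (MeasurableEquiv.piCongrLeft X (Set.sigmaEquiv (fun b ↦ (γ b : Set ι)) hγ)).symm.trans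
    (MeasurableEquiv.piCurry fun b (i : γ b) ↦ X i)

theorem piEquivBlocks_apply (hγ : ∀ i, ∃! b, i ∈ γ b) (x : ∀ i, X i) (b : β) :
    piEquivBlocks hγ x b = (γ b).restrict x :=
  rfl

theorem measurePreserving_piEquivBlocks [Fintype ι] [Fintype β] (hγ : ∀ i, ∃! b, i ∈ γ b)
    (μ : ∀ i, Measure (X i)) [∀ i, SigmaFinite (μ i)] :
    MeasurePreserving (piEquivBlocks hγ) (Measure.pi μ)
      (Measure.pi fun b ↦ Measure.pi fun i : γ b ↦ μ i) :=
  .symm (piEquivBlocks hγ).symm <|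
    (measurePreserving_piCongrLeft μ (Set.sigmaEquiv (fun b ↦ (γ b : Set ι)) hγ)).comp
      (measurePreserving_piCurry_symm fun b (i : γ b) ↦ μ i)

theorem setIntegral_prod_restrict_blocks [Fintype ι] [Fintype β] {𝕜 : Type*} [RCLike 𝕜]
    (hγ : ∀ i, ∃! b, i ∈ γ b) (μ : ∀ i, Measure (X i)) [∀ i, SigmaFinite (μ i)]
    (s : ∀ b, Set (∀ i : γ b, X i)) (f : ∀ b, (∀ i : γ b, X i) → 𝕜) :
    ∫ x in {x | ∀ b, (γ b).restrict x ∈ s b}, ∏ b, f b ((γ b).restrict x) ∂Measure.pi μ =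
      ∏ b, ∫ y in s b, f b y ∂Measure.pi fun i : γ b ↦ μ i := by
  have region_eq : {x : ∀ i, X i | ∀ b, (γ b).restrict x ∈ s b} =
      piEquivBlocks hγ ⁻¹' Set.pi Set.univ s := by
    ext x
    simp only [Set.mem_ofPred_eq, Set.mem_preimage, Set.mem_univ_pi, piEquivBlocks_apply]
  calc
    _ = ∫ x in piEquivBlocks hγ ⁻¹' Set.pi Set.univ s,
          ∏ b, f b (piEquivBlocks hγ x b) ∂Measure.pi μ := by
      simp only [region_eq, piEquivBlocks_apply]
    _ = ∫ y in Set.pi Set.univ s, ∏ b, f b (y b)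
          ∂Measure.pi fun b ↦ Measure.pi fun i : γ b ↦ μ i :=
      (measurePreserving_piEquivBlocks hγ μ).setIntegral_preimage_emb
        (piEquivBlocks hγ).measurableEmbedding (fun y ↦ ∏ b, f b (y b)) _
    _ = _ := by rw [Measure.restrict_pi_pi, integral_fintype_prod_eq_prod]

end Blocks

theorem integral_Icc_inv_of_pos {a b : ℝ} (ha : 0 < a) (hab : a ≤ b) :
    ∫ s in Icc a b, s⁻¹ = log (b / a) := by
  rw [integral_Icc_eq_integral_Ioc, ← intervalIntegral.integral_of_le hab,
    integral_inv_of_pos ha (ha.trans_le hab)]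

section Radial

variable {E : Type*} [NormedAddCommGroup E] [NormedSpace ℝ E] {ι : Type*} [Fintype ι]

theorem integral_rpow_smul_comp_sq_Ioi (p : ℝ) (f : ℝ → E) :
    ∫ r in Ioi (0 : ℝ), r ^ p • f (r ^ 2) =
      (2⁻¹ : ℝ) • ∫ s in Ioi (0 : ℝ), s ^ ((p - 1) / 2) • f s := by
  rw [← integral_comp_rpow_Ioi_of_pos (g := fun s ↦ s ^ ((p - 1) / 2) • f s) two_pos,
    ← integral_smul]
  refine setIntegral_congr_fun measurableSet_Ioi fun r (hr : 0 < r) ↦ ?_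
  have rpow_split : r ^ p = (r ^ 2) ^ ((p - 1) / 2) * r := by
    rw [← rpow_natCast_mul hr.le, ← rpow_add_one hr.ne']
    ring_nf
  have two_sub_one : (2 : ℝ) - 1 = 1 := by norm_num
  simp only [rpow_split, two_sub_one, rpow_one, rpow_two, smul_smul]
  congr 1
  ring

theorem euclideanSpace_volume_real_ball_zero_one [Nonempty ι] :
    (volume : Measure (EuclideanSpace ℝ ι)).real (Metric.ball 0 1) =
      π ^ (Fintype.card ι / 2 : ℝ) / Gamma (Fintype.card ι / 2 + 1) := by
  rw [Measure.real, EuclideanSpace.volume_ball, ENNReal.ofReal_one, one_pow, one_mul,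
    ENNReal.toReal_ofReal (by positivity), rpow_div_two_eq_sqrt _ pi_nonneg, rpow_natCast]

theorem integral_comp_sum_sq [Nonempty ι] (f : ℝ → E) :
    ∫ x : ι → ℝ, f (∑ i, x i ^ 2) =
      (π ^ (Fintype.card ι / 2 : ℝ) / Gamma (Fintype.card ι / 2)) •
        ∫ s in Ioi (0 : ℝ), s ^ (Fintype.card ι / 2 - 1 : ℝ) • f s := by
  calc
    ∫ x : ι → ℝ, f (∑ i, x i ^ 2) = ∫ x : EuclideanSpace ℝ ι, f (‖x‖ ^ 2) := by
      simp only [← (PiLp.volume_preserving_toLp ι).integral_comp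
        (MeasurableEquiv.toLp 2 (ι → ℝ)).measurableEmbedding, EuclideanSpace.real_norm_sq_eq]
    _ = Fintype.card ι • (π ^ (Fintype.card ι / 2 : ℝ) / Gamma (Fintype.card ι / 2 + 1)) •
          ∫ r in Ioi (0 : ℝ), r ^ (Fintype.card ι - 1) • f (r ^ 2) := by
      rw [integral_fun_norm_addHaar volume fun r ↦ f (r ^ 2), finrank_euclideanSpace,
        euclideanSpace_volume_real_ball_zero_one]
    _ = Fintype.card ι • (π ^ (Fintype.card ι / 2 : ℝ) / Gamma (Fintype.card ι / 2 + 1)) •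
          (2⁻¹ : ℝ) • ∫ s in Ioi (0 : ℝ), s ^ (Fintype.card ι / 2 - 1 : ℝ) • f s := by
      simp only [← rpow_natCast _ (Fintype.card ι - 1), Nat.cast_pred Fintype.card_pos,
        integral_rpow_smul_comp_sq_Ioi]
      rw [sub_sub, one_add_one_eq_two, sub_div, div_self two_ne_zero]
    _ = _ := by
      rw [Gamma_add_one (by positivity), ← Nat.cast_smul_eq_nsmul ℝ, smul_smul, smul_smul]
      congr 1
      field_simp

theorem setIntegral_comp_sum_sq [Nonempty ι] {t : Set ℝ} (ht : MeasurableSet t) (f : ℝ → E) :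
    ∫ x in {x : ι → ℝ | ∑ i, x i ^ 2 ∈ t}, f (∑ i, x i ^ 2) =
      (π ^ (Fintype.card ι / 2 : ℝ) / Gamma (Fintype.card ι / 2)) •
        ∫ s in Ioi 0 ∩ t, s ^ (Fintype.card ι / 2 - 1 : ℝ) • f s := by
  have region_measurable : MeasurableSet {x : ι → ℝ | ∑ i, x i ^ 2 ∈ t} :=
    ht.preimage (by fun_prop)
  rw [← integral_indicator region_measurable, ← setIntegral_indicator ht, Set.indicator_smul]
  exact integral_comp_sum_sq (t.indicator f)

theorem setIntegral_sum_sq_rpow_neg_half_card [Nonempty ι] {a b : ℝ} (ha : 0 < a) (hab : a ≤ b) :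
    ∫ x in {x : ι → ℝ | ∑ i, x i ^ 2 ∈ Icc a b}, (∑ i, x i ^ 2) ^ (-Fintype.card ι / 2 : ℝ) =
      π ^ (Fintype.card ι / 2 : ℝ) * log (b / a) / Gamma (Fintype.card ι / 2) := by
  have Icc_subset_Ioi : Icc a b ⊆ Ioi 0 := fun s hs ↦ ha.trans_le hs.1
  have integrand_eq : ∀ s ∈ Icc a b,
      s ^ (Fintype.card ι / 2 - 1 : ℝ) • s ^ (-Fintype.card ι / 2 : ℝ) = s⁻¹ := fun s hs ↦ by
    rw [smul_eq_mul, ← rpow_add (Icc_subset_Ioi hs), ← rpow_neg_one]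
    ring_nf
  rw [setIntegral_comp_sum_sq measurableSet_Icc (· ^ (-Fintype.card ι / 2 : ℝ)),
    Set.inter_eq_right.2 Icc_subset_Ioi, setIntegral_congr_fun measurableSet_Icc integrand_eq,
    integral_Icc_inv_of_pos ha hab, smul_eq_mul, div_mul_eq_mul_div]

theorem setIntegral_mean_sq_rpow_neg_half_card [Nonempty ι] {a b : ℝ} (ha : 0 < a) (hab : a ≤ b) :
    ∫ x in {x : ι → ℝ | (∑ i, x i ^ 2) / Fintype.card ι ∈ Icc a b},
        (∑ i, x i ^ 2) ^ (-Fintype.card ι / 2 : ℝ) =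
      π ^ (Fintype.card ι / 2 : ℝ) * log (b / a) / Gamma (Fintype.card ι / 2) := by
  have card_pos : (0 : ℝ) < Fintype.card ι := by exact_mod_cast Fintype.card_pos
  simp only [Set.mem_Icc, le_div_iff₀ card_pos, div_le_iff₀ card_pos]
  rw [← mul_div_mul_right b a card_pos.ne']
  exact setIntegral_sum_sq_rpow_neg_half_card (mul_pos ha card_pos) (by gcongr)

end Radial

theorem stmt_11_general {ι β : Type*} [Fintype ι] [Fintype β] (γ : β → Finset ι)
    (hγ : ∀ i, ∃! b, i ∈ γ b) (hne : ∀ b, (γ b).Nonempty) (σmin σmax : β → ℝ)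
    (hmin : ∀ b, 0 < σmin b) (hσ : ∀ b, σmin b ≤ σmax b) :
    ∫ c in {c : ι → ℝ | ∀ b, σmin b ≤ (∑ i ∈ γ b, c i ^ 2) / #(γ b) ∧
        (∑ i ∈ γ b, c i ^ 2) / #(γ b) ≤ σmax b},
      ∏ b, (∑ i ∈ γ b, c i ^ 2) ^ (-(#(γ b) : ℝ) / 2) =
    π ^ (Fintype.card ι / 2 : ℝ) * (∏ b, log (σmax b / σmin b)) /
      ∏ b, Gamma (#(γ b) / 2) := by
  have sum_block (b : β) (c : ι → ℝ) :
      ∑ i ∈ γ b, c i ^ 2 = ∑ i, (γ b).restrict c i ^ 2 := (sum_coe_sort (γ b) (c · ^ 2)).symm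
  have integral_block (b : β) :
      ∫ y in {y : γ b → ℝ | (∑ i, y i ^ 2) / #(γ b) ∈ Icc (σmin b) (σmax b)},
        (∑ i, y i ^ 2) ^ (-(#(γ b) : ℝ) / 2) =
      π ^ (#(γ b) / 2 : ℝ) * log (σmax b / σmin b) / Gamma (#(γ b) / 2) := by
    have : Nonempty (γ b) := (hne b).to_subtype
    simpa only [Fintype.card_coe] using
      setIntegral_mean_sq_rpow_neg_half_card (ι := γ b) (hmin b) (hσ b)
  calc
    _ = ∏ b, ∫ y in {y : γ b → ℝ | (∑ i, y i ^ 2) / #(γ b) ∈ Icc (σmin b) (σmax b)},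
          (∑ i, y i ^ 2) ^ (-(#(γ b) : ℝ) / 2) := by
      simp only [sum_block]
      exact setIntegral_prod_restrict_blocks (X := fun _ ↦ ℝ) hγ (fun _ ↦ volume)
        (fun b ↦ {y : γ b → ℝ | (∑ i, y i ^ 2) / #(γ b) ∈ Icc (σmin b) (σmax b)})
        (fun b y ↦ (∑ i, y i ^ 2) ^ (-(#(γ b) : ℝ) / 2))
    _ = ∏ b, π ^ (#(γ b) / 2 : ℝ) * log (σmax b / σmin b) / Gamma (#(γ b) / 2) := by
      simp only [integral_block]
    _ = _ := by
      rw [prod_div_distrib, prod_mul_distrib, ← rpow_sum_of_pos pi_pos, ← sum_div,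
        card_eq_sum_card_of_existsUnique_mem hγ, Nat.cast_sum]

theorem stmt_11 (n B : ℕ) (hn : 1 ≤ n) (γ : Fin (B + 1) → Finset (Fin n))
    (hdisj : ∀ b b' : Fin (B + 1), b ≠ b' → Disjoint (γ b) (γ b'))
    (hcover : Finset.univ.biUnion γ = (Finset.univ : Finset (Fin n)))
    (k : Fin (B + 1) → ℕ) (hk : ∀ b, (γ b).card = k b) (hk1 : ∀ b, 1 ≤ k b)
    (σmin σmax : ℝ) (h0 : 0 < σmin) (hσ : σmin < σmax) :
    ∫ c in {c : Fin n → ℝ | ∀ b : Fin (B + 1),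
        σmin ≤ Sg (γ b) c / (k b : ℝ) ∧ Sg (γ b) c / (k b : ℝ) ≤ σmax},
      ∏ b : Fin (B + 1), (Sg (γ b) c) ^ (-(k b : ℝ) / 2)
    = Real.pi ^ ((n : ℝ) / 2) * (Real.log (σmax / σmin)) ^ (B + 1) /
        ∏ b : Fin (B + 1), Real.Gamma ((k b : ℝ) / 2) := by
  obtain rfl : k = fun b ↦ #(γ b) := funext fun b ↦ (hk b).symm
  have hγ := existsUnique_mem_of_pairwise_disjoint hdisj fun i ↦ by
    simpa using hcover.ge (mem_univ i)
  simpa [Sg] using stmt_11_general γ hγ (fun b ↦ card_pos.1 (hk1 b)) (fun _ ↦ σmin)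
    (fun _ ↦ σmax) (fun _ ↦ h0) (fun _ ↦ hσ.le)
end
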